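/- Let n ≥ 1 and let Ω ⊊ ℝⁿ be a nonempty open set with d(x) := dist(x, ℝⁿ∖Ω), satisfying −Δd ≥ 0 in the sense of distributions on Ω (i.e. ∫_Ω d Δφ dx ≤ 0 for every nonnegative φ ∈ C_c^∞(Ω)) and having finite inner radius R := sup_{x ∈ Ω} d(x) < ∞. Then for every s > 1 and every u ∈ C_c^∞(Ω), one has ∫_Ω |∇u| / d^{s−1} dx ≥ (s−1) · ∫_Ω |u| / d^s dx + (1/R^{s−1}) · ∫_Ω |∇u| dx. -/

import Mathlib

open MeasureTheory Metric Set

/-- The (pointwise) Laplacian of a function on Euclidean space,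
as the sum of its repeated directional derivatives along the coordinate directions. -/
noncomputable def lapl {n : ℕ} (φ : EuclideanSpace ℝ (Fin n) → ℝ)
    (x : EuclideanSpace ℝ (Fin n)) : ℝ :=
  ∑ i : Fin n,
    fderiv ℝ (fun y => fderiv ℝ φ y (EuclideanSpace.single i (1 : ℝ))) x
      (EuclideanSpace.single i (1 : ℝ))

/-!
Write `d` for the distance to `Ωᶜ`. Condition `-Δ d ≥ 0` says `∫ ⟪∇ d, ∇ φ⟫ ≥ 0` for smooth
`φ ≥ 0`, and mollification extends this to Lipschitz `φ ≥ 0` with compact support in `Ω`: the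
gradients of the mollified functions converge almost everywhere and stay bounded. Take
`φ = |u| (d ^ (1 - s) - c)` with `c = R ^ (1 - s)`, which is nonnegative since `d ≤ R`. By
Rademacher's theorem `d` is differentiable almost everywhere, with `‖∇ d‖ = 1` in `Ω`, so
`0 ≤ ∫ ⟪∇ d, ∇ φ⟫ ≤ -(s - 1) ∫ |u| / d ^ s + ∫ ‖∇ u‖ (d ^ (1 - s) - c)`.
-/

section Calculus

open Filter Topology
open scoped NNReal

theorem infDist_compl_pos {X : Type*} [PseudoMetricSpace X] {Ω : Set X} (hΩ : IsOpen Ω)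
    (hΩu : Ω ≠ univ) {x : X} (hx : x ∈ Ω) : 0 < infDist x Ωᶜ :=
  (hΩ.isClosed_compl.notMem_iff_infDist_pos (nonempty_compl.2 hΩu)).1 (notMem_compl_iff.2 hx)

theorem norm_fderiv_infDist {E : Type*} [NormedAddCommGroup E] [NormedSpace ℝ E] [ProperSpace E]
    {S : Set E} (hS : IsClosed S) (hne : S.Nonempty) {x : E} (hx : x ∉ S)
    (hd : DifferentiableAt ℝ (infDist · S) x) : ‖fderiv ℝ (infDist · S) x‖ = 1 := by
  refine le_antisymm (norm_fderiv_le_of_lipschitz ℝ (lipschitz_infDist_pt S)) ?_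
  obtain ⟨y, hy, hxy⟩ := hS.exists_infDist_eq_dist hne x
  have hpos : 0 < infDist x S := (hS.notMem_iff_infDist_pos hne).1 hx
  set L := fderiv ℝ (infDist · S) x
  have hderiv : HasDerivAt (fun t : ℝ => infDist (x + t • (y - x)) S - (1 - t) * infDist x S)
      (L (y - x) - -1 * infDist x S) 0 :=
    (hd.hasFDerivAt.hasLineDerivAt (y - x)).sub
      (((hasDerivAt_id (0 : ℝ)).const_sub 1).mul_const _)
  -- The distance decreases at unit speed towards the nearest point `y`, so the difference is
  -- nonpositive for `t ≤ 1` and vanishes at `t = 0`.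
  have hmax : IsLocalMax
      (fun t : ℝ => infDist (x + t • (y - x)) S - (1 - t) * infDist x S) 0 := by
    filter_upwards [eventually_le_nhds one_pos] with t ht
    have hle : infDist (x + t • (y - x)) S ≤ (1 - t) * infDist x S := by
      calc infDist (x + t • (y - x)) S ≤ dist (x + t • (y - x)) y := infDist_le_dist_of_mem hy
        _ = ‖(1 - t) • (x - y)‖ := by rw [dist_eq_norm]; congr 1; module
        _ = (1 - t) * infDist x S := by
          rw [norm_smul, Real.norm_of_nonneg (sub_nonneg.2 ht), hxy, dist_eq_norm]
    simpa using hle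
  have hL : L (y - x) = -infDist x S := by linarith [hmax.hasDerivAt_eq_zero hderiv]
  refine le_of_mul_le_mul_right ?_ hpos
  calc 1 * infDist x S = ‖L (y - x)‖ := by rw [hL, norm_neg, Real.norm_of_nonneg hpos.le, one_mul]
    _ ≤ ‖L‖ * ‖y - x‖ := L.le_opNorm _
    _ = ‖L‖ * infDist x S := by rw [hxy, dist_comm, dist_eq_norm]

theorem norm_fderiv_abs_le {E : Type*} [NormedAddCommGroup E] [NormedSpace ℝ E] {u : E → ℝ} {x : E}
    (hu : DifferentiableAt ℝ u x) : ‖fderiv ℝ (fun y => |u y|) x‖ ≤ ‖fderiv ℝ u x‖ := by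
  rcases lt_trichotomy (u x) 0 with hneg | hzero | hpos
  · rw [(hu.hasFDerivAt.abs_of_neg hneg).fderiv, norm_neg]
  · have hmin : IsLocalMin (fun y => |u y|) x :=
      Eventually.of_forall fun y => by simp only [hzero, abs_zero, abs_nonneg]
    simp only [hmin.fderiv_eq_zero, norm_zero, norm_nonneg]
  · rw [(hu.hasFDerivAt.abs_of_pos hpos).fderiv]

theorem exists_lipschitzWith_mul_of_hasCompactSupport {X : Type*} [PseudoMetricSpace X]
    {v h : X → ℝ} {A B : ℝ≥0} (hv : LipschitzWith A v) (hvc : HasCompactSupport v)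
    (hh : LipschitzOnWith B h (tsupport v)) : ∃ C, LipschitzWith C fun x => v x * h x := by
  obtain ⟨V, hV⟩ := hvc.exists_bound_of_continuous hv.continuous
  obtain ⟨H, hH⟩ := hvc.isCompact.exists_bound_of_continuousOn hh.continuousOn
  have hzero : ∀ x ∉ tsupport v, v x = 0 := fun x => image_eq_zero_of_notMem_tsupport
  have hbound : ∀ x ∈ tsupport v, ∀ y,
      |v x * h x - v y * h y| ≤ (A * H + V * B) * dist x y := by
    intro x hx y
    have hvh : |v y * (h x - h y)| ≤ V * (B * dist x y) := by
      rw [abs_mul]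
      by_cases hy : y ∈ tsupport v
      · exact mul_le_mul (hV y) (hh.dist_le_mul x hx y hy) (abs_nonneg _)
          ((norm_nonneg _).trans (hV y))
      · rw [hzero y hy, abs_zero, zero_mul]
        have := (norm_nonneg _).trans (hV y)
        positivity
    calc |v x * h x - v y * h y| = |(v x - v y) * h x + v y * (h x - h y)| := by congr 1; ring
      _ ≤ |v x - v y| * |h x| + |v y * (h x - h y)| := by
        rw [← abs_mul]; exact abs_add_le _ _
      _ ≤ A * dist x y * H + V * (B * dist x y) := by
        gcongr
        exacts [hv.dist_le_mul x y, hH x hx]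
      _ = (A * H + V * B) * dist x y := by ring
  refine ⟨(A * H + V * B).toNNReal, LipschitzWith.of_dist_le_mul fun x y => ?_⟩
  have hle := mul_le_mul_of_nonneg_right (Real.le_coe_toNNReal (A * H + V * B))
    (dist_nonneg (x := x) (y := y))
  by_cases hx : x ∈ tsupport v
  · exact (hbound x hx y).trans hle
  by_cases hy : y ∈ tsupport v
  · rw [dist_comm (v x * h x)]
    exact (hbound y hy x).trans (dist_comm x y ▸ hle)
  · rw [hzero x hx, hzero y hy, zero_mul, zero_mul, dist_self]
    positivity

theorem exists_lipschitzOnWith_comp_of_contDiffAt {X : Type*} [PseudoMetricSpace X] {f : X → ℝ}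
    {g : ℝ → ℝ} {B : ℝ≥0} {K : Set X} (hf : LipschitzWith B f) (hK : IsCompact K)
    (hg : ∀ x ∈ K, ContDiffAt ℝ 1 g (f x)) : ∃ C, LipschitzOnWith C (fun x => g (f x)) K := by
  refine LocallyLipschitzOn.exists_lipschitzOnWith_of_compact hK fun x hx => ?_
  obtain ⟨C, t, ht, hgt⟩ := (hg x hx).exists_lipschitzOnWith
  exact ⟨_, f ⁻¹' t, mem_nhdsWithin_of_mem_nhds (hf.continuous.continuousAt ht),
    hgt.comp hf.lipschitzOnWith (mapsTo_preimage f t)⟩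

theorem exists_lipschitzWith_abs_mul_comp {X : Type*} [PseudoMetricSpace X] {f u : X → ℝ}
    {g : ℝ → ℝ} {A B : ℝ≥0} (hf : LipschitzWith B f) (hu : LipschitzWith A u)
    (huc : HasCompactSupport u) (hg : ∀ x ∈ tsupport u, ContDiffAt ℝ 1 g (f x)) :
    ∃ C, LipschitzWith C fun x => |u x| * g (f x) := by
  obtain ⟨D, hD⟩ := exists_lipschitzOnWith_comp_of_contDiffAt hf huc.isCompact hg
  exact exists_lipschitzWith_mul_of_hasCompactSupport (lipschitzWith_one_norm.comp hu) huc.abs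
    (hD.mono (tsupport_comp_subset abs_zero u))

theorem continuousAt_deriv_of_contDiffAt {g : ℝ → ℝ} {t : ℝ} (hg : ContDiffAt ℝ 1 g t) :
    ContinuousAt (deriv g) t :=
  (hg.continuousAt_fderiv one_ne_zero).clm_apply continuousAt_const

end Calculus

section LipschitzFunctions

open Filter Topology
open scoped NNReal Convolution Pointwise

theorem exists_contDiffBump_seq_rOut_tendsto_zero {E : Type*} [NormedAddCommGroup E] {ε : ℝ}
    (hε : 0 < ε) :
    ∃ η : ℕ → ContDiffBump (0 : E), (∀ k, (η k).rOut ≤ ε) ∧ (∀ k, (η k).rOut ≤ 2 * (η k).rIn) ∧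
      Tendsto (fun k => (η k).rOut) atTop (𝓝 0) := by
  have hpos : ∀ k : ℕ, 0 < ε / (k + 1) := fun k => by positivity
  refine ⟨fun k => ⟨ε / (k + 1) / 2, ε / (k + 1), half_pos (hpos k), half_lt_self (hpos k)⟩,
    fun k => div_le_self hε.le (le_add_of_nonneg_left k.cast_nonneg),
    fun k => (mul_div_cancel₀ _ two_ne_zero).ge, ?_⟩
  simpa only [mul_one_div, mul_zero] using tendsto_one_div_add_atTop_nhds_zero_nat.const_mul ε

variable {E : Type*} [NormedAddCommGroup E] [NormedSpace ℝ E] [FiniteDimensional ℝ E]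
  [MeasurableSpace E] [BorelSpace E] {μ : Measure E} {φ : E → ℝ} {C : ℝ≥0}

theorem memLp_top_fderiv_of_lipschitzWith (hφ : LipschitzWith C φ) : MemLp (fderiv ℝ φ) ⊤ μ :=
  memLp_top_of_bound (measurable_fderiv ℝ φ).aestronglyMeasurable C
    (.of_forall fun _ => norm_fderiv_le_of_lipschitz ℝ hφ)

variable [μ.IsAddHaarMeasure]

theorem integral_fderiv_mul_eq_neg_integral_mul_fderiv {B : ℝ≥0} {f g : E → ℝ}
    (hf : LipschitzWith B f) (hg : LipschitzWith C g) (hgc : HasCompactSupport g) (v : E) :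
    ∫ x, fderiv ℝ f x v * g x ∂μ = -∫ x, f x * fderiv ℝ g x v ∂μ := by
  calc ∫ x, fderiv ℝ f x v * g x ∂μ = ∫ x, lineDeriv ℝ f x v * g x ∂μ := by
        refine integral_congr_ae ?_
        filter_upwards [hf.ae_differentiableAt] with x hx
        rw [hx.lineDeriv_eq_fderiv]
    _ = ∫ x, lineDeriv ℝ g x (-v) * f x ∂μ := hf.integral_lineDeriv_mul_eq hg hgc v
    _ = ∫ x, -(f x * fderiv ℝ g x v) ∂μ := by
        refine integral_congr_ae ?_
        filter_upwards [hg.ae_differentiableAt] with x hx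
        rw [hx.lineDeriv_eq_fderiv, map_neg, neg_mul, mul_comm]
    _ = -∫ x, f x * fderiv ℝ g x v ∂μ := integral_neg _

theorem hasFDerivAt_convolution_of_lipschitzWith {η : E → ℝ} (hη : Continuous η)
    (hηc : HasCompactSupport η) (hφ : LipschitzWith C φ) (x : E) :
    HasFDerivAt (η ⋆[ContinuousLinearMap.lsmul ℝ ℝ, μ] φ)
      ((η ⋆[ContinuousLinearMap.lsmul ℝ ℝ, μ] fderiv ℝ φ) x) x := by
  have hcont : ∀ y, Continuous fun t => η t * φ (y - t) := fun y =>
    hη.mul (hφ.continuous.comp (continuous_const.sub continuous_id))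
  refine (hasFDerivAt_integral_of_dominated_loc_of_lip (s := univ)
    (F := fun y t => η t * φ (y - t)) (F' := fun t => η t • fderiv ℝ φ (x - t))
    (bound := fun t => |η t| * C) univ_mem
    (.of_forall fun y => (hcont y).aestronglyMeasurable)
    ((hcont x).integrable_of_hasCompactSupport hηc.mul_right) ?_ (.of_forall fun t => ?_)
    ((hη.abs.integrable_of_hasCompactSupport hηc.abs).mul_const _) ?_).2
  · exact hη.aestronglyMeasurable.smul
      ((measurable_fderiv ℝ φ).comp (measurable_const.sub measurable_id)).aestronglyMeasurable
  · refine LipschitzOnWith.of_dist_le_mul fun y _ z _ => ?_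
    calc dist (η t * φ (y - t)) (η t * φ (z - t)) = |η t| * dist (φ (y - t)) (φ (z - t)) := by
          rw [Real.dist_eq, Real.dist_eq, ← mul_sub, abs_mul]
      _ ≤ |η t| * (C * dist y z) := by
          gcongr
          simpa only [dist_sub_right] using hφ.dist_le_mul (y - t) (z - t)
      _ = Real.nnabs (|η t| * C) * dist y z := by
          rw [Real.coe_nnabs, abs_of_nonneg (show 0 ≤ |η t| * C by positivity), mul_assoc]
  · filter_upwards [(Measure.measurePreserving_sub_left μ x).quasiMeasurePreserving.ae
      hφ.ae_differentiableAt] with t ht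
    exact ((hasFDerivAt_comp_sub t).2 ht.hasFDerivAt).const_mul (η t)

variable (η : ContDiffBump (0 : E))

theorem tsupport_normed_convolution_subset :
    tsupport (η.normed μ ⋆[ContinuousLinearMap.lsmul ℝ ℝ, μ] φ) ⊆
      cthickening η.rOut (tsupport φ) := by
  refine closure_minimal ((support_convolution_subset _).trans ?_) isClosed_cthickening
  rw [η.support_normed_eq, add_comm (ball _ _)]
  calc Function.support φ + ball 0 η.rOut = thickening η.rOut (Function.support φ) := by simp
    _ ⊆ thickening η.rOut (tsupport φ) := thickening_subset_of_subset _ (subset_tsupport φ)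
    _ ⊆ cthickening η.rOut (tsupport φ) := thickening_subset_cthickening _ _

theorem norm_fderiv_normed_convolution_le (hφ : LipschitzWith C φ) (x : E) :
    ‖fderiv ℝ (η.normed μ ⋆[ContinuousLinearMap.lsmul ℝ ℝ, μ] φ) x‖ ≤ C := by
  rw [(hasFDerivAt_convolution_of_lipschitzWith η.continuous_normed
    η.hasCompactSupport_normed hφ x).fderiv, ← dist_zero_right]
  refine dist_convolution_le C.coe_nonneg η.support_normed_eq.subset η.nonneg_normed
    η.integral_normed (measurable_fderiv ℝ φ).aestronglyMeasurable fun y _ => ?_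
  rw [dist_zero_right]
  exact norm_fderiv_le_of_lipschitz ℝ hφ

theorem exists_contDiff_seq_tendsto_fderiv {Ω : Set E} (hΩ : IsOpen Ω) (hφ : LipschitzWith C φ)
    (hφc : HasCompactSupport φ) (hφΩ : tsupport φ ⊆ Ω) (hφ0 : ∀ x, 0 ≤ φ x) :
    ∃ K ⊆ Ω, IsCompact K ∧ ∃ g : ℕ → E → ℝ,
      (∀ k, ContDiff ℝ (⊤ : ℕ∞) (g k) ∧ tsupport (g k) ⊆ K ∧ (∀ x, 0 ≤ g k x) ∧
        ∀ x, ‖fderiv ℝ (g k) x‖ ≤ C) ∧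
      ∀ᵐ x ∂μ, Tendsto (fun k => fderiv ℝ (g k) x) atTop (𝓝 (fderiv ℝ φ x)) := by
  obtain ⟨ε, hε, hεΩ⟩ := hφc.exists_cthickening_subset_open hΩ hφΩ
  obtain ⟨η, hηε, hηratio, hηlim⟩ := exists_contDiffBump_seq_rOut_tendsto_zero (E := E) hε
  refine ⟨cthickening ε (tsupport φ), hεΩ, hφc.isCompact.cthickening,
    fun k => (η k).normed μ ⋆[ContinuousLinearMap.lsmul ℝ ℝ, μ] φ, fun k => ⟨?_, ?_, ?_, ?_⟩, ?_⟩
  · exact (η k).hasCompactSupport_normed.contDiff_convolution_left _ (η k).contDiff_normed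
      hφ.continuous.locallyIntegrable
  · exact (tsupport_normed_convolution_subset (η k)).trans (cthickening_mono (hηε k) _)
  · exact fun x => integral_nonneg fun t => mul_nonneg ((η k).nonneg_normed t) (hφ0 _)
  · exact norm_fderiv_normed_convolution_le (η k) hφ
  · filter_upwards [ContDiffBump.ae_convolution_tendsto_right_of_locallyIntegrable hηlim
      (.of_forall hηratio) ((memLp_top_fderiv_of_lipschitzWith (μ := μ) hφ).locallyIntegrable
        le_top)] with x hx
    simpa only [(hasFDerivAt_convolution_of_lipschitzWith (η _).continuous_normed
      (η _).hasCompactSupport_normed hφ x).fderiv] using hx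

end LipschitzFunctions

section WeakSuperharmonic

open Filter Topology InnerProductSpace
open scoped NNReal Laplacian Gradient

section Gradient

variable {E : Type*} [NormedAddCommGroup E] [InnerProductSpace ℝ E] [CompleteSpace E]

theorem norm_gradient (f : E → ℝ) (x : E) : ‖∇ f x‖ = ‖fderiv ℝ f x‖ :=
  (toDual ℝ E).symm.norm_map _

theorem norm_inner_gradient_le {f : E → ℝ} {B : ℝ≥0} (hf : LipschitzWith B f) (φ : E → ℝ) (x : E) :
    ‖inner ℝ (∇ f x) (∇ φ x)‖ ≤ B * ‖fderiv ℝ φ x‖ := by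
  calc ‖inner ℝ (∇ f x) (∇ φ x)‖ ≤ ‖∇ f x‖ * ‖∇ φ x‖ := norm_inner_le_norm _ _
    _ ≤ B * ‖fderiv ℝ φ x‖ := by
      rw [norm_gradient, norm_gradient]
      gcongr
      exact norm_fderiv_le_of_lipschitz ℝ hf

theorem measurable_gradient [MeasurableSpace E] [BorelSpace E] (f : E → ℝ) : Measurable (∇ f) :=
  (toDual ℝ E).symm.continuous.measurable.comp (measurable_fderiv ℝ f)

theorem setIntegral_inner_gradient_eq_integral [MeasurableSpace E] {μ : Measure E} {Ω : Set E}
    (f : E → ℝ) {φ : E → ℝ} (hφΩ : tsupport φ ⊆ Ω) :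
    ∫ x in Ω, inner ℝ (∇ f x) (∇ φ x) ∂μ = ∫ x, inner ℝ (∇ f x) (∇ φ x) ∂μ :=
  setIntegral_eq_integral_of_forall_compl_eq_zero fun x hx => by
    rw [real_inner_comm, inner_gradient_left,
      fderiv_of_notMem_tsupport ℝ fun h => hx (hφΩ h), zero_apply]

end Gradient

variable {E : Type*} [NormedAddCommGroup E] [InnerProductSpace ℝ E] [FiniteDimensional ℝ E]

theorem inner_gradient_eq_sum {ι : Type*} [Fintype ι] (b : OrthonormalBasis ι ℝ E) (f φ : E → ℝ)
    (x : E) : inner ℝ (∇ f x) (∇ φ x) = ∑ i, fderiv ℝ f x (b i) * fderiv ℝ φ x (b i) := by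
  rw [← b.sum_inner_mul_inner]
  refine Finset.sum_congr rfl fun i _ => ?_
  rw [inner_gradient_left, real_inner_comm, inner_gradient_left]

theorem laplacian_eq_sum_fderiv_fderiv {ι : Type*} [Fintype ι] (b : OrthonormalBasis ι ℝ E)
    {g : E → ℝ} (hg : ContDiff ℝ 2 g) (x : E) :
    Δ g x = ∑ i, fderiv ℝ (fun y => fderiv ℝ g y (b i)) x (b i) := by
  have hdiff : Differentiable ℝ (fderiv ℝ g) :=
    (hg.fderiv_right one_add_one_eq_two.le).differentiable one_ne_zero
  rw [laplacian_eq_iteratedFDeriv_orthonormalBasis g b]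
  refine Finset.sum_congr rfl fun i _ => ?_
  rw [iteratedFDeriv_two_apply, fderiv_clm_apply hdiff.differentiableAt
    (differentiableAt_const _)]
  simp

theorem lapl_eq_laplacian {n : ℕ} {φ : EuclideanSpace ℝ (Fin n) → ℝ} (hφ : ContDiff ℝ 2 φ) :
    lapl φ = Δ φ := by
  funext x
  rw [laplacian_eq_sum_fderiv_fderiv (EuclideanSpace.basisFun (Fin n) ℝ) hφ]
  simp only [lapl, EuclideanSpace.basisFun_apply]

variable [MeasurableSpace E] [BorelSpace E] {μ : Measure E}

/-- `-Δ f ≥ 0` on `Ω` in the sense of distributions. Locally integrable functions `f` are regarded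
as distributions by integration against `μ`, and positivity is tested on nonnegative smooth
functions with compact support in `Ω`. Applied to the distance to `Ωᶜ`, this is the condition on
`Ω` in the Hardy inequality. -/
def IsDistribSuperharmonicOn (μ : Measure E) (f : E → ℝ) (Ω : Set E) : Prop :=
  ∀ φ : E → ℝ, ContDiff ℝ (⊤ : ℕ∞) φ → HasCompactSupport φ → tsupport φ ⊆ Ω → (∀ z, 0 ≤ φ z) →
    ∫ x in Ω, f x * Δ φ x ∂μ ≤ 0

variable {f φ : E → ℝ} {B C : ℝ≥0} [μ.IsAddHaarMeasure]

theorem integral_mul_laplacian_eq_neg_integral_inner_gradient (hf : LipschitzWith B f)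
    (hφ : ContDiff ℝ 2 φ) (hφc : HasCompactSupport φ) :
    ∫ x, f x * Δ φ x ∂μ = -∫ x, inner ℝ (∇ f x) (∇ φ x) ∂μ := by
  let b := stdOrthonormalBasis ℝ E
  have hsmooth : ∀ i, ContDiff ℝ 1 fun x => fderiv ℝ φ x (b i) := fun i =>
    (hφ.fderiv_right one_add_one_eq_two.le).clm_apply contDiff_const
  have hcomp : ∀ i, HasCompactSupport fun x => fderiv ℝ φ x (b i) := fun i =>
    hφc.fderiv_apply ℝ (b i)
  have hintΔ : ∀ i, Integrable
      (fun x => f x * fderiv ℝ (fun y => fderiv ℝ φ y (b i)) x (b i)) μ := fun i =>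
    (hf.continuous.mul
      (((hsmooth i).continuous_fderiv one_ne_zero).clm_apply continuous_const)
      ).integrable_of_hasCompactSupport ((hcomp i).fderiv_apply ℝ (b i)).mul_left
  have hint : ∀ i, Integrable (fun x => fderiv ℝ f x (b i) * fderiv ℝ φ x (b i)) μ := fun i =>
    ((hsmooth i).continuous.integrable_of_hasCompactSupport (hcomp i)).bdd_mul
      (measurable_fderiv_apply_const ℝ f (b i)).aestronglyMeasurable
      (.of_forall fun x => (fderiv ℝ f x).le_of_opNorm_le_of_le
        (norm_fderiv_le_of_lipschitz ℝ hf) (b.norm_eq_one i).le)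
  have hparts : ∀ i, ∫ x, f x * fderiv ℝ (fun y => fderiv ℝ φ y (b i)) x (b i) ∂μ =
      -∫ x, fderiv ℝ f x (b i) * fderiv ℝ φ x (b i) ∂μ := fun i => by
    obtain ⟨D, hD⟩ := (hsmooth i).lipschitzWith_of_hasCompactSupport (hcomp i) one_ne_zero
    rw [integral_fderiv_mul_eq_neg_integral_mul_fderiv hf hD (hcomp i), neg_neg]
  simp_rw [laplacian_eq_sum_fderiv_fderiv b hφ, inner_gradient_eq_sum b, Finset.mul_sum]
  rw [integral_finsetSum _ fun i _ => hintΔ i, integral_finsetSum _ fun i _ => hint i,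
    ← Finset.sum_neg_distrib]
  exact Finset.sum_congr rfl fun i _ => hparts i

theorem integral_inner_gradient_nonneg_of_contDiff {Ω : Set E} (hf : LipschitzWith B f)
    (hsup : IsDistribSuperharmonicOn μ f Ω) (hφ : ContDiff ℝ (⊤ : ℕ∞) φ)
    (hφc : HasCompactSupport φ) (hφΩ : tsupport φ ⊆ Ω) (hφ0 : ∀ x, 0 ≤ φ x) :
    0 ≤ ∫ x, inner ℝ (∇ f x) (∇ φ x) ∂μ := by
  have hzero : ∀ x ∉ Ω, f x * Δ φ x = 0 := fun x hx => by
    have hφx : φ =ᶠ[𝓝 x] fun _ => 0 :=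
      notMem_tsupport_iff_eventuallyEq.1 fun h => hx (hφΩ h)
    rw [(laplacian_congr_nhds hφx).eq_of_nhds, laplacian_const, Pi.zero_apply, mul_zero]
  have hle := hsup φ hφ hφc hφΩ hφ0
  rwa [setIntegral_eq_integral_of_forall_compl_eq_zero hzero,
    integral_mul_laplacian_eq_neg_integral_inner_gradient hf (contDiff_infty.1 hφ 2)
      hφc, neg_nonpos] at hle

theorem integral_inner_gradient_nonneg_of_lipschitzWith {Ω : Set E} (hΩ : IsOpen Ω)
    (hf : LipschitzWith B f) (hsup : IsDistribSuperharmonicOn μ f Ω) (hφ : LipschitzWith C φ)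
    (hφc : HasCompactSupport φ) (hφΩ : tsupport φ ⊆ Ω) (hφ0 : ∀ x, 0 ≤ φ x) :
    0 ≤ ∫ x, inner ℝ (∇ f x) (∇ φ x) ∂μ := by
  obtain ⟨K, hKΩ, hK, g, hg, hlim⟩ :=
    exists_contDiff_seq_tendsto_fderiv (μ := μ) hΩ hφ hφc hφΩ hφ0
  have hbound : ∀ k x, ‖inner ℝ (∇ f x) (∇ (g k) x)‖ ≤ K.indicator (fun _ => (B * C : ℝ)) x := by
    intro k x
    obtain ⟨-, hgK, -, hgC⟩ := hg k
    refine (norm_inner_gradient_le hf (g k) x).trans ?_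
    by_cases hx : x ∈ K
    · rw [indicator_of_mem hx]
      exact mul_le_mul_of_nonneg_left (hgC x) B.coe_nonneg
    · rw [indicator_of_notMem hx, fderiv_of_notMem_tsupport ℝ fun h => hx (hgK h), norm_zero,
        mul_zero]
  refine ge_of_tendsto' (tendsto_integral_of_dominated_convergence
    (K.indicator fun _ => (B * C : ℝ))
    (fun k => ((measurable_gradient f).inner (measurable_gradient (g k))).aestronglyMeasurable)
    ((integrable_indicator_iff hK.measurableSet).2 (integrableOn_const hK.measure_lt_top.ne))
    (fun k => .of_forall (hbound k)) ?_) fun k => ?_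
  · filter_upwards [hlim] with x hx
    exact tendsto_const_nhds.inner (((toDual ℝ E).symm.continuous.tendsto _).comp hx)
  · obtain ⟨hgs, hgK, hg0, -⟩ := hg k
    exact integral_inner_gradient_nonneg_of_contDiff hf hsup hgs
      (hK.of_isClosed_subset (isClosed_tsupport _) hgK) (hgK.trans hKΩ) hg0

end WeakSuperharmonic

section WeightedHardy

open Filter Topology InnerProductSpace
open scoped NNReal Gradient

theorem integrable_mul_of_continuousOn_tsupport {X : Type*} [TopologicalSpace X] [T2Space X]
    [MeasurableSpace X] [OpensMeasurableSpace X] {μ : Measure X} {F h : X → ℝ}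
    (hF : Integrable F μ) (hFc : HasCompactSupport F) (hh : ContinuousOn h (tsupport F)) :
    Integrable (fun x => F x * h x) μ :=
  (integrableOn_iff_integrable_of_support_subset
    ((Function.support_mul_subset_left F h).trans (subset_tsupport F))).1
    (hF.integrableOn.mul_continuousOn hh hFc.isCompact)

theorem integrable_abs_mul_of_continuousOn {X : Type*} [TopologicalSpace X] [T2Space X]
    [MeasurableSpace X] [OpensMeasurableSpace X] {μ : Measure X} [IsFiniteMeasureOnCompacts μ]
    {u h : X → ℝ} (hu : Continuous u) (huc : HasCompactSupport u)
    (hh : ContinuousOn h (tsupport u)) : Integrable (fun x => |u x| * h x) μ :=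
  integrable_mul_of_continuousOn_tsupport (hu.abs.integrable_of_hasCompactSupport huc.abs) huc.abs
    (hh.mono (tsupport_comp_subset abs_zero u))

variable {E : Type*} [NormedAddCommGroup E]

theorem integrable_norm_fderiv_mul_of_continuousOn [NormedSpace ℝ E] [FiniteDimensional ℝ E]
    [MeasurableSpace E] [BorelSpace E] {μ : Measure E} [IsFiniteMeasureOnCompacts μ] {u h : E → ℝ}
    {A : ℝ≥0} (hu : LipschitzWith A u) (huc : HasCompactSupport u)
    (hh : ContinuousOn h (tsupport u)) : Integrable (fun x => ‖fderiv ℝ u x‖ * h x) μ := by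
  have hint : Integrable (fderiv ℝ u) μ := memLp_one_iff_integrable.1 <|
    (huc.fderiv ℝ).memLp_of_bound (measurable_fderiv ℝ u).aestronglyMeasurable A
      (.of_forall fun _ => norm_fderiv_le_of_lipschitz ℝ hu)
  exact integrable_mul_of_continuousOn_tsupport hint.norm (huc.fderiv ℝ).norm
    (hh.mono ((tsupport_comp_subset norm_zero _).trans (tsupport_fderiv_subset ℝ)))

theorem inner_gradient_gradient_mul_comp [InnerProductSpace ℝ E] [CompleteSpace E]
    {f v : E → ℝ} {g : ℝ → ℝ} {x : E} (hf : DifferentiableAt ℝ f x)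
    (hv : DifferentiableAt ℝ v x) (hg : DifferentiableAt ℝ g (f x)) :
    inner ℝ (∇ f x) (∇ (fun y => v y * g (f y)) x) =
      v x * deriv g (f x) * ‖∇ f x‖ ^ 2 + g (f x) * inner ℝ (∇ f x) (∇ v x) := by
  have hderiv : HasFDerivAt (fun y => v y * g (f y))
      (v x • deriv g (f x) • fderiv ℝ f x + g (f x) • fderiv ℝ v x) x :=
    hv.hasFDerivAt.mul (hg.hasDerivAt.comp_hasFDerivAt x hf.hasFDerivAt)
  have hsq : fderiv ℝ f x (∇ f x) = ‖∇ f x‖ ^ 2 := by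
    rw [← inner_gradient_left, real_inner_self_eq_norm_sq]
  rw [real_inner_comm, inner_gradient_left, hderiv.fderiv, real_inner_comm, inner_gradient_left]
  simp only [add_apply, smul_apply, smul_eq_mul, hsq]
  ring

theorem inner_gradient_gradient_abs_mul_comp_le [InnerProductSpace ℝ E] [CompleteSpace E]
    {f u : E → ℝ} {g : ℝ → ℝ} {x : E} (hf : DifferentiableAt ℝ f x) (hf1 : ‖∇ f x‖ = 1)
    (hu : DifferentiableAt ℝ u x) (habs : DifferentiableAt ℝ (fun y => |u y|) x)
    (hg : DifferentiableAt ℝ g (f x)) (hg0 : 0 ≤ g (f x)) :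
    inner ℝ (∇ f x) (∇ (fun y => |u y| * g (f y)) x) ≤
      |u x| * deriv g (f x) + ‖fderiv ℝ u x‖ * g (f x) := by
  have hinner : inner ℝ (∇ f x) (∇ (fun y => |u y|) x) ≤ ‖fderiv ℝ u x‖ := by
    calc inner ℝ (∇ f x) (∇ (fun y => |u y|) x) ≤ ‖∇ f x‖ * ‖∇ (fun y => |u y|) x‖ :=
          real_inner_le_norm _ _
      _ = ‖fderiv ℝ (fun y => |u y|) x‖ := by rw [hf1, one_mul, norm_gradient]
      _ ≤ ‖fderiv ℝ u x‖ := norm_fderiv_abs_le hu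
  rw [inner_gradient_gradient_mul_comp hf habs hg, hf1, one_pow, mul_one, mul_comm (g _)]
  gcongr

variable [InnerProductSpace ℝ E] [FiniteDimensional ℝ E] [MeasurableSpace E] [BorelSpace E]
  {μ : Measure E}

theorem integrable_inner_gradient [IsFiniteMeasureOnCompacts μ] {f φ : E → ℝ} {B C : ℝ≥0}
    (hf : LipschitzWith B f) (hφ : LipschitzWith C φ) (hφc : HasCompactSupport φ) :
    Integrable (fun x => inner ℝ (∇ f x) (∇ φ x)) μ := by
  refine (integrable_norm_fderiv_mul_of_continuousOn hφ hφc
    (continuousOn_const (c := (B : ℝ)))).mono'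
    ((measurable_gradient f).inner (measurable_gradient φ)).aestronglyMeasurable
    (.of_forall fun x => ?_)
  rw [mul_comm]
  exact norm_inner_gradient_le hf φ x

variable [μ.IsAddHaarMeasure] {Ω : Set E} {f u : E → ℝ} {A B : ℝ≥0}

theorem setIntegral_inner_gradient_abs_mul_comp_nonneg {g : ℝ → ℝ} (hΩ : IsOpen Ω)
    (hf : LipschitzWith B f) (hsup : IsDistribSuperharmonicOn μ f Ω) (hu : LipschitzWith A u)
    (huc : HasCompactSupport u) (huΩ : tsupport u ⊆ Ω)
    (hg : ∀ x ∈ tsupport u, ContDiffAt ℝ 1 g (f x)) (hg0 : ∀ x ∈ tsupport u, 0 ≤ g (f x)) :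
    0 ≤ ∫ x in Ω, inner ℝ (∇ f x) (∇ (fun y => |u y| * g (f y)) x) ∂μ := by
  obtain ⟨C, hC⟩ := exists_lipschitzWith_abs_mul_comp hf hu huc hg
  have hsupp : tsupport (fun x => |u x| * g (f x)) ⊆ Ω :=
    (tsupport_mul_subset_left.trans (tsupport_comp_subset abs_zero u)).trans huΩ
  rw [setIntegral_inner_gradient_eq_integral f hsupp]
  refine integral_inner_gradient_nonneg_of_lipschitzWith hΩ hf hsup hC huc.abs.mul_right hsupp
    fun x => ?_
  by_cases hx : x ∈ tsupport u
  · exact mul_nonneg (abs_nonneg _) (hg0 x hx)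
  · rw [image_eq_zero_of_notMem_tsupport hx, abs_zero, zero_mul]

theorem setIntegral_abs_mul_neg_deriv_comp_le {g : ℝ → ℝ} (hΩ : IsOpen Ω)
    (hf : LipschitzWith B f) (hsup : IsDistribSuperharmonicOn μ f Ω)
    (hf1 : ∀ᵐ x ∂μ.restrict Ω, ‖∇ f x‖ = 1) (hu : LipschitzWith A u)
    (huc : HasCompactSupport u) (huΩ : tsupport u ⊆ Ω)
    (hg : ∀ x ∈ Ω, ContDiffAt ℝ 1 g (f x)) (hg0 : ∀ x ∈ Ω, 0 ≤ g (f x)) :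
    ∫ x in Ω, |u x| * -deriv g (f x) ∂μ ≤ ∫ x in Ω, ‖fderiv ℝ u x‖ * g (f x) ∂μ := by
  obtain ⟨C, hC⟩ := exists_lipschitzWith_abs_mul_comp hf hu huc fun x hx => hg x (huΩ hx)
  have habs : LipschitzWith (1 * A) fun x => |u x| := lipschitzWith_one_norm.comp hu
  have hpointwise : ∀ᵐ x ∂μ.restrict Ω, inner ℝ (∇ f x) (∇ (fun y => |u y| * g (f y)) x) ≤
      |u x| * deriv g (f x) + ‖fderiv ℝ u x‖ * g (f x) := by
    filter_upwards [ae_restrict_of_ae hf.ae_differentiableAt,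
      ae_restrict_of_ae hu.ae_differentiableAt, ae_restrict_of_ae habs.ae_differentiableAt,
      ae_restrict_mem hΩ.measurableSet, hf1] with x hfx hux habsx hx hf1x
    exact inner_gradient_gradient_abs_mul_comp_le hfx hf1x hux habsx
      ((hg x hx).differentiableAt one_ne_zero) (hg0 x hx)
  have hfc : ∀ x, ContinuousAt f x := fun x => hf.continuous.continuousAt
  have hintg' : Integrable (fun x => |u x| * deriv g (f x)) μ :=
    integrable_abs_mul_of_continuousOn hu.continuous huc fun x hx =>
      ((continuousAt_deriv_of_contDiffAt (hg x (huΩ hx))).comp (f := f)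
        (hfc x)).continuousWithinAt
  have hintg : Integrable (fun x => ‖fderiv ℝ u x‖ * g (f x)) μ :=
    integrable_norm_fderiv_mul_of_continuousOn hu huc fun x hx =>
      ((hg x (huΩ hx)).continuousAt.comp (f := f) (hfc x)).continuousWithinAt
  have hsum : 0 ≤ (∫ x in Ω, |u x| * deriv g (f x) ∂μ) +
      ∫ x in Ω, ‖fderiv ℝ u x‖ * g (f x) ∂μ := by
    calc 0 ≤ ∫ x in Ω, inner ℝ (∇ f x) (∇ (fun y => |u y| * g (f y)) x) ∂μ :=
          setIntegral_inner_gradient_abs_mul_comp_nonneg hΩ hf hsup hu huc huΩ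
            (fun x hx => hg x (huΩ hx)) fun x hx => hg0 x (huΩ hx)
      _ ≤ ∫ x in Ω, (|u x| * deriv g (f x) + ‖fderiv ℝ u x‖ * g (f x)) ∂μ :=
          integral_mono_ae (integrable_inner_gradient hf hC huc.abs.mul_right).integrableOn
            (hintg'.add hintg).integrableOn hpointwise
      _ = _ := integral_add hintg'.integrableOn hintg.integrableOn
  simp only [mul_neg, integral_neg]
  linarith

theorem ae_restrict_norm_gradient_infDist_compl (hΩ : IsOpen Ω) (hΩu : Ω ≠ univ) :
    ∀ᵐ x ∂μ.restrict Ω, ‖∇ (infDist · Ωᶜ) x‖ = 1 := by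
  filter_upwards [ae_restrict_of_ae (lipschitz_infDist_pt Ωᶜ).ae_differentiableAt,
    ae_restrict_mem hΩ.measurableSet] with x hdx hx
  rw [norm_gradient]
  exact norm_fderiv_infDist hΩ.isClosed_compl (nonempty_compl.2 hΩu) (notMem_compl_iff.2 hx) hdx

theorem mul_setIntegral_abs_div_rpow_infDist_le {c s : ℝ} (hΩ : IsOpen Ω) (hΩu : Ω ≠ univ)
    (hsup : IsDistribSuperharmonicOn μ (infDist · Ωᶜ) Ω)
    (hc : ∀ x ∈ Ω, c ≤ infDist x Ωᶜ ^ (1 - s)) (hu : LipschitzWith A u)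
    (huc : HasCompactSupport u) (huΩ : tsupport u ⊆ Ω) :
    (s - 1) * ∫ x in Ω, |u x| / infDist x Ωᶜ ^ s ∂μ ≤
      ∫ x in Ω, ‖fderiv ℝ u x‖ * (infDist x Ωᶜ ^ (1 - s) - c) ∂μ := by
  have hderiv : ∀ x ∈ Ω, (s - 1) * (|u x| / infDist x Ωᶜ ^ s) =
      |u x| * -deriv (fun t => t ^ (1 - s) - c) (infDist x Ωᶜ) := fun x hx => by
    have hd := infDist_compl_pos hΩ hΩu hx
    rw [((Real.hasDerivAt_rpow_const (.inl hd.ne')).sub_const _).deriv, sub_sub_cancel_left,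
      Real.rpow_neg hd.le]
    ring
  rw [← integral_const_mul, setIntegral_congr_fun hΩ.measurableSet hderiv]
  exact setIntegral_abs_mul_neg_deriv_comp_le hΩ (lipschitz_infDist_pt Ωᶜ) hsup
    (ae_restrict_norm_gradient_infDist_compl hΩ hΩu) hu huc huΩ
    (fun x hx => (Real.contDiffAt_rpow_const_of_ne (infDist_compl_pos hΩ hΩu hx).ne').sub
      contDiffAt_const) fun x hx => sub_nonneg.2 (hc x hx)

theorem l1_weighted_hardy_gradient_remainder_meanconvex_general {R s : ℝ} (hΩ : IsOpen Ω)
    (hΩu : Ω ≠ univ) (hsup : IsDistribSuperharmonicOn μ (infDist · Ωᶜ) Ω)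
    (hR : ∀ x ∈ Ω, infDist x Ωᶜ ≤ R) (hs : 1 ≤ s) (hu : LipschitzWith A u)
    (huc : HasCompactSupport u) (huΩ : tsupport u ⊆ Ω) :
    (s - 1) * (∫ x in Ω, |u x| / infDist x Ωᶜ ^ s ∂μ) +
        1 / R ^ (s - 1) * ∫ x in Ω, ‖fderiv ℝ u x‖ ∂μ ≤
      ∫ x in Ω, ‖fderiv ℝ u x‖ / infDist x Ωᶜ ^ (s - 1) ∂μ := by
  have hpos : ∀ x ∈ Ω, 0 < infDist x Ωᶜ := fun x hx => infDist_compl_pos hΩ hΩu hx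
  have hrpow : ∀ x ∈ Ω, infDist x Ωᶜ ^ (1 - s) = 1 / infDist x Ωᶜ ^ (s - 1) := fun x hx => by
    rw [← neg_sub, Real.rpow_neg (hpos x hx).le, one_div]
  have hle : ∀ x ∈ Ω, 1 / R ^ (s - 1) ≤ infDist x Ωᶜ ^ (1 - s) := fun x hx => by
    rw [hrpow x hx]
    exact one_div_le_one_div_of_le (Real.rpow_pos_of_pos (hpos x hx) _)
      (Real.rpow_le_rpow (hpos x hx).le (hR x hx) (sub_nonneg.2 hs))
  have hint : Integrable (fun x => ‖fderiv ℝ u x‖ * infDist x Ωᶜ ^ (1 - s)) μ :=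
    integrable_norm_fderiv_mul_of_continuousOn hu huc
      ((continuous_infDist_pt Ωᶜ).continuousOn.rpow_const fun x hx =>
        .inl (hpos x (huΩ hx)).ne')
  have hint1 : Integrable (fun x => ‖fderiv ℝ u x‖ * (1 / R ^ (s - 1))) μ :=
    integrable_norm_fderiv_mul_of_continuousOn hu huc continuousOn_const
  have hweight : ∀ x ∈ Ω, ‖fderiv ℝ u x‖ / infDist x Ωᶜ ^ (s - 1) =
      ‖fderiv ℝ u x‖ * infDist x Ωᶜ ^ (1 - s) := fun x hx => by rw [hrpow x hx, mul_one_div]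
  have hmain := mul_setIntegral_abs_div_rpow_infDist_le hΩ hΩu hsup hle hu huc huΩ
  simp only [mul_sub] at hmain
  rw [integral_sub hint.integrableOn hint1.integrableOn, integral_mul_const] at hmain
  rw [setIntegral_congr_fun hΩ.measurableSet hweight, mul_comm (1 / _)]
  linarith

end WeightedHardy

/-- `L^1` weighted Hardy inequality with gradient remainder on sets
satisfying `−Δd ≥ 0` and having finite inner radius. -/
theorem l1_weighted_hardy_gradient_remainder_meanconvex (n : ℕ) (hn : 1 ≤ n)
    (Ω : Set (EuclideanSpace ℝ (Fin n))) (hΩo : IsOpen Ω) (hΩne : Ω.Nonempty)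
    (hΩuniv : Ω ≠ Set.univ)
    (hsub : ∀ φ : EuclideanSpace ℝ (Fin n) → ℝ, ContDiff ℝ (⊤ : ℕ∞) φ →
      HasCompactSupport φ → tsupport φ ⊆ Ω → (∀ z, 0 ≤ φ z) →
      (∫ x in Ω, Metric.infDist x Ωᶜ * lapl φ x) ≤ 0)
    (R : ℝ) (hR : IsLUB ((fun x => Metric.infDist x Ωᶜ) '' Ω) R) :
    ∀ s : ℝ, 1 < s →
    ∀ u : EuclideanSpace ℝ (Fin n) → ℝ, ContDiff ℝ (⊤ : ℕ∞) u →
      HasCompactSupport u → tsupport u ⊆ Ω →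
      (∫ x in Ω, ‖fderiv ℝ u x‖ / (Metric.infDist x Ωᶜ) ^ (s - 1)) ≥
        (s - 1) * (∫ x in Ω, |u x| / (Metric.infDist x Ωᶜ) ^ s)
        + (1 / R ^ (s - 1)) * ∫ x in Ω, ‖fderiv ℝ u x‖ := by
  intro s hs u hu huc huΩ
  have hsup : IsDistribSuperharmonicOn volume (infDist · Ωᶜ) Ω := fun φ hφ hφc hφΩ hφ0 => by
    simpa only [lapl_eq_laplacian (contDiff_infty.1 hφ 2)] using hsub φ hφ hφc hφΩ hφ0
  obtain ⟨A, hA⟩ := hu.lipschitzWith_of_hasCompactSupport huc (by simp)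
  exact l1_weighted_hardy_gradient_remainder_meanconvex_general hΩo hΩuniv hsup
    (fun x hx => hR.1 (mem_image_of_mem _ hx)) hs.le hA huc huΩ
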